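/- arXiv:0909.1031 — 4 statements merged into one kernel-verified Lean document; each statement's English description precedes it below -/
import Mathlib

section
/- Let k be a field of characteristic p > 0, G a finite group, N a normal subgroup of G whose order is divisible by p, and V a finitely generated k[G/N]-module, regarded as a kG-module by inflation along the natural surjection G → G/N. Then every kG-module endomorphism of V which factors through a projective kG-module is zero. Consequently the stable endomorphism ring End̲_{kG}(V) is isomorphic to End_{kG}(V) = End_{k[G/N]}(V); in particular, End̲_{kG}(V) ≅ k if and only if End_{k[G/N]}(V) ≅ k. -/
/-!
A projective `kG`-module `P` carries a function `θ : P → P` with `x = ∑ g, g • θ (g⁻¹ • x)`: on `kG`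
take for `θ` the projection onto the coefficient at `1`, and transport this to a summand of a free
module. If `f = b ∘ a` factors through `P` then `f v = ∑ g, g • b (θ (a (g⁻¹ • v)))`. As `N` acts
trivially on `V`, the summand depends only on the coset `gN`, so the sum is a multiple of `|N|`,
which vanishes in `k`. The statements on endomorphism rings follow at once, since `G → G ⧸ N` is
surjective and the zero map factors through the zero module.
-/

/-- A bundled `k`-linear representation of `G`. -/
structure RepM (k G : Type) [CommRing k] [Group G] : Type 1 where
  carrier : Type
  [isAddCommGroup : AddCommGroup carrier]
  [isModule : Module k carrier]
  ρ : Representation k G carrier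

attribute [instance] RepM.isAddCommGroup RepM.isModule

/-- A linear map between representations is equivariant if it commutes with the
group actions. -/
def IsEquivariant {k G M N : Type} [CommRing k] [Group G] [AddCommGroup M] [Module k M]
    [AddCommGroup N] [Module k N] (ρM : Representation k G M) (ρN : Representation k G N)
    (f : M →ₗ[k] N) : Prop :=
  ∀ g : G, f ∘ₗ ρM g = ρN g ∘ₗ f

/-- A map of `kG`-modules factors through a projective `kG`-module. -/
def FactorsThroughProjective (k G : Type) [CommRing k] [Group G] {M N : Type}
    [AddCommGroup M] [Module k M] [AddCommGroup N] [Module k N]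
    (ρM : Representation k G M) (ρN : Representation k G N) (f : M →ₗ[k] N) : Prop :=
  ∃ (P : RepM k G) (a : M →ₗ[k] P.carrier) (b : P.carrier →ₗ[k] N),
    Module.Projective (MonoidAlgebra k G) P.ρ.asModule ∧
    IsEquivariant ρM P.ρ a ∧ IsEquivariant P.ρ ρN b ∧ f = b ∘ₗ a

/-- One direction of Higman's criterion, for the trivial subgroup: the identity of a projective
`kG`-module is a trace from the trivial subgroup. Linearity of `θ` is not recorded. -/
lemma exists_trace_eq_self {k G : Type} [Field k] [Group G] [Fintype G] (M : Type) [AddCommGroup M]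
    [Module (MonoidAlgebra k G) M] [Module.Projective (MonoidAlgebra k G) M] :
    ∃ θ : M → M, ∀ x, x = ∑ g : G, (MonoidAlgebra.single g (1 : k)) •
      θ ((MonoidAlgebra.single g⁻¹ (1 : k)) • x) := by
  obtain ⟨s, hs⟩ := Module.Projective.out (R := MonoidAlgebra k G) (P := M)
  refine ⟨fun x => Finsupp.linearCombination (MonoidAlgebra k G) id ((s x).mapRange
    (fun u => MonoidAlgebra.single 1 (u.coeff 1)) (by simp)), fun x => ?_⟩
  simp only [← map_smul, ← map_sum]
  conv_lhs => rw [← hs x]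
  congr 1
  ext q : 1
  simp only [Finsupp.finsetSum_apply, Finsupp.smul_apply, Finsupp.mapRange_apply, map_smul,
    smul_eq_mul]
  ext h
  classical
  simp [MonoidAlgebra.single_mul_single, MonoidAlgebra.coeff_single_mul_apply]

/-- A function on a finite group that is constant on the cosets of a subgroup whose order is zero
in `k` has total sum zero. -/
lemma sum_comp_mk_eq_zero {k G V : Type} [Field k] [Group G] [Fintype G] (N : Subgroup G)
    (hN : (Nat.card N : k) = 0) [AddCommGroup V] [Module k V] (F : G ⧸ N → V) :
    ∑ g : G, F (g : G ⧸ N) = 0 := by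
  classical
  have : Fintype N := Fintype.ofFinite _
  have : Fintype (G ⧸ N) := Fintype.ofFinite _
  rw [Fintype.sum_equiv (Subgroup.groupEquivQuotientProdSubgroup (s := N))
    (fun g => F (g : G ⧸ N)) (fun x => F x.1) (fun g => rfl), Fintype.sum_prod_type]
  simp only [Finset.sum_const, Finset.card_univ, ← Nat.card_eq_fintype_card]
  refine Finset.sum_eq_zero fun q _ => ?_
  rw [← Nat.cast_smul_eq_nsmul k, hN, zero_smul]

lemma eq_zero_of_factorsThroughProjective {k G V : Type} [Field k] [Group G] [Finite G]
    (N : Subgroup G) [N.Normal] (hN : (Nat.card N : k) = 0) [AddCommGroup V] [Module k V]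
    (ρ : Representation k (G ⧸ N) V) (f : V →ₗ[k] V)
    (hf : FactorsThroughProjective k G (ρ.comp (QuotientGroup.mk' N))
      (ρ.comp (QuotientGroup.mk' N)) f) : f = 0 := by
  have : Fintype G := Fintype.ofFinite _
  obtain ⟨P, a, b, hP, ha, hb, rfl⟩ := hf
  obtain ⟨θ, hθ⟩ := exists_trace_eq_self (k := k) (G := G) P.ρ.asModule
  let e := P.ρ.asModuleEquiv
  have key : ∀ y : P.carrier, y = ∑ g : G, P.ρ g (e (θ (e.symm (P.ρ g⁻¹ y)))) := by
    intro y
    have := congrArg e (hθ (e.symm y))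
    rw [map_sum] at this
    simp only [e, Representation.asModuleEquiv_map_smul, Representation.asAlgebraHom_single,
      one_smul] at this
    convert this using 6
    · simp
    · exact Representation.asModuleEquiv_symm_map_rho _ _ _
  ext v
  have ha' : ∀ g v, a (ρ (QuotientGroup.mk g) v) = P.ρ g (a v) := fun g v =>
    LinearMap.congr_fun (ha g) v
  have hb' : ∀ g y, b (P.ρ g y) = ρ (QuotientGroup.mk g) (b y) := fun g y =>
    LinearMap.congr_fun (hb g) y
  rw [LinearMap.comp_apply, key (a v), map_sum]
  simp only [hb', ← ha']
  exact sum_comp_mk_eq_zero N hN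
    (fun q => ρ q (b (e (θ (e.symm (a (ρ q⁻¹ v)))))))

lemma factorsThroughProjective_zero {k G M N : Type} [Field k] [Group G]
    [AddCommGroup M] [Module k M] [AddCommGroup N] [Module k N]
    (ρM : Representation k G M) (ρN : Representation k G N) :
    FactorsThroughProjective k G ρM ρN 0 := by
  refine ⟨⟨PUnit, 1⟩, 0, 0, ?_, fun g => by simp, fun g => by simp, by simp⟩
  have : Subsingleton (Representation.asModule (1 : Representation k G PUnit)) :=
    inferInstanceAs (Subsingleton PUnit)
  infer_instance

/-
STATEMENT 1:
Let k be a field of characteristic p > 0, G a finite group, N a normal subgroup of G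
whose order is divisible by p, and V a finitely generated k[G/N]-module, regarded as
a kG-module by inflation along G → G/N. Then every kG-module endomorphism of V which
factors through a projective kG-module is zero. Consequently the stable endomorphism
ring End̲_{kG}(V) is isomorphic to End_{kG}(V) = End_{k[G/N]}(V); in particular,
End̲_{kG}(V) ≅ k if and only if End_{k[G/N]}(V) ≅ k.
-/
theorem stmt1 (k : Type) [Field k] (p : ℕ) (hp : 0 < p) [CharP k p]
    (G : Type) [Group G] [Finite G] (N : Subgroup G) [N.Normal]
    (hdvd : p ∣ Nat.card N)
    (V : Type) [AddCommGroup V] [Module k V] [Module.Finite k V]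
    (ρ : Representation k (G ⧸ N) V) :
    -- every kG-endomorphism of the inflation of V factoring through a projective
    -- kG-module is zero
    (∀ f : V →ₗ[k] V,
        IsEquivariant (ρ.comp (QuotientGroup.mk' N)) (ρ.comp (QuotientGroup.mk' N)) f →
        FactorsThroughProjective k G (ρ.comp (QuotientGroup.mk' N))
          (ρ.comp (QuotientGroup.mk' N)) f →
        f = 0)
    -- End_{kG}(V) = End_{k[G/N]}(V): a k-endomorphism is kG-equivariant iff it is
    -- k[G/N]-equivariant
    ∧ (∀ f : V →ₗ[k] V,
        IsEquivariant (ρ.comp (QuotientGroup.mk' N)) (ρ.comp (QuotientGroup.mk' N)) f ↔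
        IsEquivariant ρ ρ f)
    -- End̲_{kG}(V) ≅ k iff End_{k[G/N]}(V) ≅ k
    ∧ ((∀ f : V →ₗ[k] V,
          IsEquivariant (ρ.comp (QuotientGroup.mk' N)) (ρ.comp (QuotientGroup.mk' N)) f →
          ∃! c : k, FactorsThroughProjective k G (ρ.comp (QuotientGroup.mk' N))
            (ρ.comp (QuotientGroup.mk' N)) (f - c • LinearMap.id))
        ↔
       (∀ f : V →ₗ[k] V, IsEquivariant ρ ρ f → ∃! c : k, f = c • LinearMap.id)) := by
  have hN : (Nat.card N : k) = 0 := (CharP.cast_eq_zero_iff k p _).2 hdvd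
  have heq : ∀ f : V →ₗ[k] V,
      IsEquivariant (ρ.comp (QuotientGroup.mk' N)) (ρ.comp (QuotientGroup.mk' N)) f ↔
        IsEquivariant ρ ρ f := fun f =>
    ⟨fun h q => by
      obtain ⟨g, rfl⟩ := QuotientGroup.mk'_surjective N q
      exact h g, fun h g => h _⟩
  have hiff : ∀ f : V →ₗ[k] V, FactorsThroughProjective k G (ρ.comp (QuotientGroup.mk' N))
      (ρ.comp (QuotientGroup.mk' N)) f ↔ f = 0 := fun f =>
    ⟨eq_zero_of_factorsThroughProjective N hN ρ f, fun h => h ▸ factorsThroughProjective_zero _ _⟩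
  refine ⟨fun f _ hf => (hiff f).1 hf, heq, ?_⟩
  simp only [heq, hiff, sub_eq_zero]
end

section
/- Let k be an algebraically closed field of characteristic 2, W the ring of 2-typical Witt vectors over k, F the fraction field of W, and Ω an algebraic closure of F. For each ℓ ≥ 2 let ζ_{2^ℓ} ∈ Ω be a primitive 2^ℓ-th root of unity, and let F(ζ_{2^ℓ} + ζ_{2^ℓ}^{-1}) ⊆ Ω denote the subfield generated over F by ζ_{2^ℓ} + ζ_{2^ℓ}^{-1}. Define q₂(t) = t, q_{ℓ+1}(t) = q_ℓ(t)² − 2, and p_{d+1}(t) = ∏_{ℓ=2}^{d} q_ℓ(t) for d ≥ 2. Then there is an F-algebra isomorphism F[t]/(p_{d+1}(t)) ≅ ∏_{ℓ=2}^{d} F(ζ_{2^ℓ} + ζ_{2^ℓ}^{-1}). -/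
/-!
For `ζ` a primitive `2 ^ ℓ`-th root of unity, the identity `z² + z⁻² = (z + z⁻¹)² - 2` gives
`q_ℓ(ζ + ζ⁻¹) = i + i⁻¹ = 0`, where `i = ζ ^ 2 ^ (ℓ - 2)` is a square root of `-1`. The polynomial
`q_ℓ` is monic of degree `2 ^ (ℓ - 2)`; it is congruent to a power of `t` modulo `2`, and for
`ℓ ≥ 3` its constant term is `±2`. As `2` is a prime element of `W(k)`, it is therefore Eisenstein
for `ℓ ≥ 3` (and `q_2 = t`), so irreducible over `F` by Gauss's lemma. Hence `q_ℓ` is the minimal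
polynomial of `ζ + ζ⁻¹`, and `F[t]/(q_ℓ) ≅ F(ζ + ζ⁻¹)`. The `q_ℓ` are irreducible of distinct
degrees, so they are pairwise coprime, and the Chinese remainder theorem gives the isomorphism.
-/

/-- The polynomials `q_ℓ` defined by `q_2(t) = t` and `q_{ℓ+1}(t) = q_ℓ(t)^2 - 2`. -/
noncomputable def qPoly : ℕ → Polynomial ℤ
  | 0 => Polynomial.X
  | 1 => Polynomial.X
  | 2 => Polynomial.X
  | n + 3 => (qPoly (n + 2)) ^ 2 - 2

/-- The polynomial `p_{d+1}(t) = ∏_{ℓ=2}^{d} q_ℓ(t)`. -/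
noncomputable def pPoly (d : ℕ) : Polynomial ℤ := ∏ ℓ ∈ Finset.Icc 2 d, qPoly ℓ

open Polynomial

lemma qPoly_succ (n : ℕ) : qPoly (n + 3) = qPoly (n + 2) ^ 2 - 2 := rfl

lemma qPoly_two : qPoly 2 = X := rfl

lemma qPoly_monic_natDegree (n : ℕ) :
    (qPoly (n + 2)).Monic ∧ (qPoly (n + 2)).natDegree = 2 ^ n := by
  induction n with
  | zero => simp [qPoly_two, monic_X]
  | succ n ih =>
    obtain ⟨hm, hd⟩ := ih
    have hd2 : (qPoly (n + 2) ^ 2).natDegree = 2 ^ (n + 1) := by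
      rw [hm.natDegree_pow, hd, pow_succ, mul_comm]
    have hlt : (2 : ℤ[X]).natDegree < (qPoly (n + 2) ^ 2).natDegree := by
      rw [hd2, natDegree_ofNat]; positivity
    rw [show n + 1 + 2 = n + 3 from rfl, qPoly_succ]
    exact ⟨(hm.pow 2).sub_of_left (degree_lt_degree hlt),
      (natDegree_sub_eq_left_of_natDegree_lt hlt).trans hd2⟩

lemma qPoly_coeff_zero (n : ℕ) :
    (qPoly (n + 3)).coeff 0 = 2 ∨ (qPoly (n + 3)).coeff 0 = -2 := by
  induction n with
  | zero => right; simp [qPoly_succ, qPoly_two, coeff_zero_eq_eval_zero]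
  | succ n ih =>
    left
    rw [show n + 1 + 3 = (n + 1) + 3 from rfl, qPoly_succ (n + 1)]
    rw [coeff_zero_eq_eval_zero] at ih ⊢
    rw [show n + 1 + 2 = n + 3 from rfl]
    rcases ih with h | h <;> simp [h]

/-- Squaring is a ring homomorphism modulo `2`, so the recursion becomes `q_{ℓ+1} = q_ℓ ^ 2`. -/
lemma qPoly_map_zmod (n : ℕ) :
    (qPoly (n + 2)).map (Int.castRingHom (ZMod 2)) = X ^ 2 ^ n := by
  induction n with
  | zero => simp [qPoly_two]
  | succ n ih =>
    have h2 : (2 : (ZMod 2)[X]) = 0 := CharTwo.two_eq_zero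
    rw [show n + 1 + 2 = n + 3 from rfl, qPoly_succ, Polynomial.map_sub, Polynomial.map_pow, ih]
    rw [Polynomial.map_ofNat, ← pow_mul, ← pow_succ]
    exact (congrArg _ h2).trans (sub_zero _)

lemma two_dvd_coeff_qPoly (n m : ℕ) (hm : m < 2 ^ n) : (2 : ℤ) ∣ (qPoly (n + 2)).coeff m := by
  have h := congrArg (fun p => coeff p m) (qPoly_map_zmod n)
  simp only [coeff_map, coeff_X_pow, hm.ne, if_false, eq_intCast] at h
  exact_mod_cast (ZMod.intCast_zmod_eq_zero_iff_dvd _ 2).1 h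

lemma qPoly_eval_add_inv {K : Type*} [Field K] (z : K) (hz : z ≠ 0) (n : ℕ) :
    ((qPoly (n + 2)).map (Int.castRingHom K)).eval (z + z⁻¹) = z ^ 2 ^ n + (z ^ 2 ^ n)⁻¹ := by
  induction n with
  | zero => simp [qPoly_two]
  | succ n ih =>
    have hw : z ^ 2 ^ n ≠ 0 := pow_ne_zero _ hz
    rw [show n + 1 + 2 = n + 3 from rfl, qPoly_succ, Polynomial.map_sub, Polynomial.map_pow,
      eval_sub, eval_pow, ih, pow_succ 2 n, pow_mul]
    simp only [Polynomial.map_ofNat, eval_ofNat]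
    field_simp
    ring

lemma qPoly_eval_root {K : Type*} [Field K] (z : K) (n : ℕ)
    (hz : IsPrimitiveRoot z (2 ^ (n + 2))) :
    ((qPoly (n + 2)).map (Int.castRingHom K)).eval (z + z⁻¹) = 0 := by
  have h1 : IsPrimitiveRoot (z ^ 2 ^ (n + 1)) 2 := hz.pow (by positivity) (by ring)
  have h2 : z ^ 2 ^ n * z ^ 2 ^ n = -1 := by
    rw [← h1.eq_neg_one_of_two_right, ← pow_add]; ring_nf
  have hz0 : z ≠ 0 := hz.ne_zero (by positivity)
  have hw : z ^ 2 ^ n ≠ 0 := pow_ne_zero _ hz0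
  rw [qPoly_eval_add_inv z hz0, add_eq_zero_iff_eq_neg, eq_neg_iff_add_eq_zero]
  field_simp
  rw [pow_two, h2]; ring

/-- Eisenstein's criterion at a prime element `2`, combined with Gauss's lemma. -/
lemma qPoly_irreducible {R F : Type*} [CommRing R] [IsDomain R] [IsIntegrallyClosed R] [Field F]
    [Algebra R F] [IsFractionRing R F] (h2 : Prime (2 : R)) (n : ℕ) :
    Irreducible ((qPoly (n + 2)).map (Int.castRingHom F)) := by
  cases n with
  | zero => simpa [qPoly_two] using irreducible_X
  | succ n =>
    obtain ⟨hm, hd⟩ := qPoly_monic_natDegree (n + 1)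
    set q := (qPoly (n + 1 + 2)).map (Int.castRingHom R) with hq
    have hqm : q.Monic := hm.map _
    have hqd : q.natDegree = 2 ^ (n + 1) := (hm.natDegree_map _).trans hd
    have hprime : (Ideal.span {(2 : R)}).IsPrime :=
      (Ideal.span_singleton_prime h2.ne_zero).2 h2
    have hirr : Irreducible q := by
      refine (hqm.isEisensteinAt_of_mem_of_notMem hprime.ne_top (fun {m} hlt => ?_) ?_).irreducible
        hprime hqm.isPrimitive (by rw [hqd]; positivity)
      · rw [Ideal.mem_span_singleton, hq, coeff_map]
        simpa using (Int.castRingHom R).map_dvd (two_dvd_coeff_qPoly (n + 1) m (hqd ▸ hlt))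
      · intro hmem
        rw [Ideal.span_singleton_pow, Ideal.mem_span_singleton] at hmem
        have h4 : (2 : R) ^ 2 ∣ 2 := by
          rcases qPoly_coeff_zero n with h | h <;> simpa [hq, coeff_map, h] using hmem
        have := (pow_dvd_pow_iff (n := 2) (m := 1) h2.ne_zero h2.not_isUnit).1 (by simpa using h4)
        omega
    have := (hqm.irreducible_iff_irreducible_map_fraction_map (K := F)).1 hirr
    rwa [hq, Polynomial.map_map, RingHom.ext_int ((algebraMap R F).comp _) (Int.castRingHom F)]
      at this

/-- The Chinese remainder theorem for a product of pairwise coprime polynomials, as an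
isomorphism of algebras. -/
noncomputable def quotientProdAlgEquiv {F ι : Type*} [Field F] [Fintype ι] (f : ι → F[X])
    (hf : Pairwise fun i j => IsCoprime (f i) (f j)) :
    (F[X] ⧸ Ideal.span {∏ i, f i}) ≃ₐ[F] ((i : ι) → AdjoinRoot (f i)) :=
  (Ideal.quotientEquivAlgOfEq F
    (Ideal.iInf_span_singleton hf).symm).trans
  (AlgEquiv.ofRingEquiv
    (f := Ideal.quotientInfRingEquivPiQuotient (fun i => Ideal.span {f i})
      fun _ _ hij => (Ideal.isCoprime_span_singleton_iff _ _).2 (hf hij))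
    fun _ => rfl)

theorem stmt13 (k : Type) [Field k] [IsAlgClosed k] [CharP k 2]
    (d : ℕ) (hd : 2 ≤ d)
    (ζ : ℕ → AlgebraicClosure (FractionRing (WittVector 2 k)))
    (hζ : ∀ ℓ, 2 ≤ ℓ → ℓ ≤ d → IsPrimitiveRoot (ζ ℓ) (2 ^ ℓ)) :
    Nonempty
      ((Polynomial (FractionRing (WittVector 2 k)) ⧸
          Ideal.span {(pPoly d).map (Int.castRingHom (FractionRing (WittVector 2 k)))})
        ≃ₐ[FractionRing (WittVector 2 k)]
       ((ℓ : Finset.Icc 2 d) →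
          IntermediateField.adjoin (FractionRing (WittVector 2 k))
            {ζ (ℓ : ℕ) + (ζ (ℓ : ℕ))⁻¹})) := by
  set F := FractionRing (WittVector 2 k)
  let f : Finset.Icc 2 d → F[X] := fun ℓ => (qPoly ℓ).map (Int.castRingHom F)
  have h2 : Prime (2 : WittVector 2 k) := by
    simpa using (WittVector.irreducible (k := k) 2).prime
  have hirr : ∀ ℓ, Irreducible (f ℓ) := by
    rintro ⟨ℓ, hℓ⟩
    obtain ⟨n, rfl⟩ := Nat.exists_eq_add_of_le' (Finset.mem_Icc.1 hℓ).1
    exact qPoly_irreducible h2 n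
  have hmon : ∀ ℓ, (f ℓ).Monic ∧ (f ℓ).natDegree = 2 ^ ((ℓ : ℕ) - 2) := by
    rintro ⟨ℓ, hℓ⟩
    obtain ⟨n, rfl⟩ := Nat.exists_eq_add_of_le' (Finset.mem_Icc.1 hℓ).1
    obtain ⟨hm, hd⟩ := qPoly_monic_natDegree n
    exact ⟨hm.map _, (hm.natDegree_map _).trans (by simpa using hd)⟩
  have hroot : ∀ ℓ : Finset.Icc 2 d, aeval (ζ (ℓ : ℕ) + (ζ (ℓ : ℕ))⁻¹) (f ℓ) = 0 := by
    rintro ⟨ℓ, hℓ⟩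
    have hp := hζ ℓ (Finset.mem_Icc.1 hℓ).1 (Finset.mem_Icc.1 hℓ).2
    obtain ⟨n, rfl⟩ := Nat.exists_eq_add_of_le' (Finset.mem_Icc.1 hℓ).1
    rw [← qPoly_eval_root _ n hp, aeval_def, eval₂_eq_eval_map, Polynomial.map_map,
      RingHom.ext_int ((algebraMap F (AlgebraicClosure F)).comp _) (Int.castRingHom _)]
  have hcop : Pairwise fun i j => IsCoprime (f i) (f j) := by
    intro i j hij
    refine (hirr i).coprime_iff_not_dvd.2 fun hdvd => hij ?_
    have hdeg := natDegree_eq_of_degree_eq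
      (degree_eq_degree_of_associated ((hirr i).associated_of_dvd (hirr j) hdvd))
    rw [(hmon i).2, (hmon j).2] at hdeg
    have hij' := Nat.pow_right_injective le_rfl hdeg
    have hi := (Finset.mem_Icc.1 i.2).1
    have hj := (Finset.mem_Icc.1 j.2).1
    exact Subtype.ext (by omega)
  have hmin : ∀ ℓ, f ℓ = minpoly F (ζ (ℓ : ℕ) + (ζ (ℓ : ℕ))⁻¹) := fun ℓ =>
    minpoly.eq_of_irreducible_of_monic (hirr ℓ) (hroot ℓ) (hmon ℓ).1
  have hprod : (pPoly d).map (Int.castRingHom F) = ∏ ℓ, f ℓ := by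
    rw [pPoly, Polynomial.map_prod, ← Finset.prod_coe_sort]
  rw [hprod]
  refine ⟨(quotientProdAlgEquiv f hcop).trans (AlgEquiv.piCongrRight fun ℓ => ?_)⟩
  rw [hmin ℓ]
  exact IntermediateField.adjoinRootEquivAdjoin F ⟨f ℓ, (hmon ℓ).1, hroot ℓ⟩
end

section
/- Let k be an algebraically closed field of characteristic 2, W the ring of 2-typical Witt vectors over k, and d ≥ 2 an integer. Define q₂(t) = t, q_{ℓ+1}(t) = q_ℓ(t)² − 2, and p_{d+1}(t) = ∏_{ℓ=2}^{d} q_ℓ(t). Let D be the generalized quaternion group of order 2^{d+1}, i.e., the group with presentation ⟨x, y | x^{2^d} = 1, y² = x^{2^{d−1}}, y x y^{-1} = x^{-1}⟩. Then W[[t]]/(p_{d+1}(t)) is isomorphic to a subquotient ring of the group algebra WD: there exist a W-subalgebra S of WD and a two-sided ideal J of S such that S/J ≅ W[[t]]/(p_{d+1}(t)) as W-algebras. -/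
open Polynomial in
/-- Writing `u + v` with `v = u⁻¹`, the recursion for `q_ℓ` is the squaring identity
`(u^m + v^m)^2 - 2 = u^(2m) + v^(2m)`. -/
theorem aeval_qPoly_add_inv {R : Type*} [Ring R] {u v : R} (huv : u * v = 1) (hvu : v * u = 1)
    (i : ℕ) : aeval (u + v) (qPoly (i + 2)) = u ^ 2 ^ i + v ^ 2 ^ i := by
  induction i with
  | zero => simp [qPoly]
  | succ i ih =>
    have hc : Commute u v := by rw [Commute, SemiconjBy, huv, hvu]
    have h1 : u ^ 2 ^ i * v ^ 2 ^ i = 1 := by rw [← hc.mul_pow, huv, one_pow]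
    have h2 : v ^ 2 ^ i * u ^ 2 ^ i = 1 := by rw [← hc.symm.mul_pow, hvu, one_pow]
    have h3 : qPoly (i + 1 + 2) = qPoly (i + 2) ^ 2 - 2 := by
      rw [show i + 1 + 2 = i + 3 from rfl, qPoly]
    rw [h3, map_sub, map_pow, ih, map_ofNat, sq, mul_add, add_mul, add_mul, h1, h2, pow_succ,
      pow_mul, pow_mul, sq, sq, ← one_add_one_eq_two (R := R)]
    abel

theorem pPoly_succ {d : ℕ} (hd : 1 ≤ d) : pPoly (d + 1) = pPoly d * qPoly (d + 1) := by
  rw [pPoly, pPoly, Finset.prod_Icc_succ_top (by omega)]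

open Polynomial in
/-- The telescoping product `(u - v) ∏ (u^(2^i) + v^(2^i))`, for `v = u⁻¹`. -/
theorem sub_mul_aeval_pPoly {R : Type*} [Ring R] {u v : R} (huv : u * v = 1) (hvu : v * u = 1)
    (e : ℕ) : (u - v) * aeval (u + v) (pPoly (e + 1)) = u ^ 2 ^ e - v ^ 2 ^ e := by
  induction e with
  | zero => simp [pPoly]
  | succ e ih =>
    have hc : Commute u v := by rw [Commute, SemiconjBy, huv, hvu]
    rw [pPoly_succ (by omega), map_mul, ← mul_assoc, ih, aeval_qPoly_add_inv huv hvu,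
      pow_succ 2 e, pow_mul, pow_mul, sq, sq, sub_mul, mul_add, mul_add,
      (hc.pow_pow (2 ^ e) (2 ^ e)).eq]
    abel

open Polynomial in
/-- If `u + u⁻¹` is a root of `p_{d+1}`, then `u` has order dividing `2^d`;
here `d = e + 1`. -/
theorem pow_eq_one_of_aeval_pPoly {R : Type*} [Ring R] {u v : R} (huv : u * v = 1)
    (hvu : v * u = 1) (e : ℕ) (h : aeval (u + v) (pPoly (e + 1)) = 0) :
    u ^ (2 * 2 ^ e) = 1 := by
  have hc : Commute u v := by rw [Commute, SemiconjBy, huv, hvu]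
  have h1 := sub_mul_aeval_pPoly huv hvu e
  rw [h, mul_zero, eq_comm, sub_eq_zero] at h1
  calc u ^ (2 * 2 ^ e) = u ^ 2 ^ e * v ^ 2 ^ e := by rw [two_mul, pow_add, ← h1]
    _ = 1 := by rw [← hc.mul_pow, huv, one_pow]

open Polynomial in
theorem qPoly_isDistinguishedAt {W : Type*} [CommRing W] [Nontrivial W] (l : ℕ) :
    0 < ((qPoly l).map (Int.castRingHom W)).natDegree ∧
    ((qPoly l).map (Int.castRingHom W)).IsDistinguishedAt (Ideal.span {(2 : W)}) := by
  have hX : 0 < ((X : ℤ[X]).map (Int.castRingHom W)).natDegree ∧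
      ((X : ℤ[X]).map (Int.castRingHom W)).IsDistinguishedAt (Ideal.span {(2 : W)}) := by
    rw [Polynomial.map_X]
    refine ⟨by simp, ⟨⟨fun {n} hn => ?_⟩, monic_X⟩⟩
    rw [natDegree_X] at hn
    have : n = 0 := by omega
    simp [this]
  match l with
  | 0 => exact hX
  | 1 => exact hX
  | 2 => exact hX
  | n + 3 =>
    obtain ⟨hpos, hq⟩ := qPoly_isDistinguishedAt (W := W) (n + 2)
    set q := (qPoly (n + 2)).map (Int.castRingHom W) with hq_def
    have hrec : (qPoly (n + 3)).map (Int.castRingHom W) = q * q - C 2 := by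
      rw [qPoly, Polynomial.map_sub, Polynomial.map_pow, sq, Polynomial.map_ofNat]
      rfl
    have hqq := hq.mul hq
    have hdeg : (q * q).natDegree = q.natDegree + q.natDegree := hq.monic.natDegree_mul hq.monic
    have hdeg' : (q * q - C 2).natDegree = (q * q).natDegree := natDegree_sub_C
    rw [hrec]
    refine ⟨by omega, ⟨⟨fun {m} hm => ?_⟩, ?_⟩⟩
    · rw [hdeg'] at hm
      rw [coeff_sub]
      refine sub_mem (hqq.mem hm) ?_
      rw [coeff_C]
      split_ifs
      · exact Ideal.mem_span_singleton_self _
      · exact zero_mem _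
    · refine hqq.monic.sub_of_left ?_
      refine degree_C_le.trans_lt ?_
      rw [← natDegree_pos_iff_degree_pos]
      omega

open Polynomial in
/-- Modulo `2` the polynomial `p_{d+1}` is a power of `t`. -/
theorem pPoly_isDistinguishedAt {W : Type*} [CommRing W] [Nontrivial W] (d : ℕ) :
    ((pPoly d).map (Int.castRingHom W)).IsDistinguishedAt (Ideal.span {(2 : W)}) := by
  rw [pPoly, Polynomial.map_prod]
  refine Finset.prod_induction _ (fun f : W[X] => f.IsDistinguishedAt (Ideal.span {(2 : W)}))
    (fun _ _ => Polynomial.IsDistinguishedAt.mul) ?_ (fun l _ => (qPoly_isDistinguishedAt l).2)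
  exact ⟨⟨fun {n} hn => by simp at hn⟩, monic_one⟩

open Polynomial in
theorem aeval_mk_X {W : Type*} [CommRing W] (J : Ideal (PowerSeries W)) (r : W[X]) :
    aeval (Ideal.Quotient.mk J PowerSeries.X) r = Ideal.Quotient.mk J (r : PowerSeries W) := by
  have h : aeval (R := W) (Ideal.Quotient.mk J PowerSeries.X) =
      (Ideal.Quotient.mkₐ W J).comp (Polynomial.coeToPowerSeries.algHom W) := by
    ext
    simp
  rw [h]
  simp

open Polynomial in
/-- By Weierstrass division every power series is congruent to a polynomial modulo `g`. -/
theorem exists_aeval_mk_X_eq {W : Type*} [CommRing W] {I : Ideal W} [IsAdicComplete I W] {g : W[X]}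
    (hg : g.IsDistinguishedAt I) (a : PowerSeries W ⧸ Ideal.span {(g : PowerSeries W)}) :
    ∃ r : W[X], aeval (Ideal.Quotient.mk (Ideal.span {(g : PowerSeries W)}) PowerSeries.X) r
      = a := by
  refine ⟨hg.isWeierstrassDivisorAt'.mod' a, ?_⟩
  refine Eq.trans ?_ hg.isWeierstrassDivisorAt'.mk_mod'_eq_self
  exact aeval_mk_X _ _

open Polynomial in
/-- For `n = 2^e`, a polynomial that kills `x + x⁻¹` in the group algebra of the quaternion group
kills every root `t` of `p_{e+2}` in every commutative algebra. The reason is that `x` can act by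
the companion matrix `M` of `X^2 - t X + 1`, which satisfies `M + M⁻¹ = t` and `M^(2n) = 1`. -/
theorem aeval_eq_zero_of_aeval_group {W A : Type*} [CommRing W] [CommRing A] [Algebra W A]
    (e : ℕ) (t : A) (ht : aeval t ((pPoly (e + 1)).map (Int.castRingHom W)) = 0) (g : W[X])
    (hg : aeval (MonoidAlgebra.of W (QuaternionGroup (2 ^ e)) (.a 1) +
      MonoidAlgebra.of W (QuaternionGroup (2 ^ e)) (.a (-1))) g = 0) :
    aeval t g = 0 := by
  rw [show Int.castRingHom W = algebraMap ℤ W from rfl, aeval_map_algebraMap] at ht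
  set x := MonoidAlgebra.of W (QuaternionGroup (2 ^ e)) (.a 1) with hx
  set y := MonoidAlgebra.of W (QuaternionGroup (2 ^ e)) (.a (-1)) with hy
  have hxy : x * y = 1 := by
    rw [hx, hy, ← map_mul, QuaternionGroup.a_mul_a, add_neg_cancel, QuaternionGroup.a_zero, map_one]
  let M : Matrix (Fin 2) (Fin 2) A := !![t, -1; 1, 0]
  let N : Matrix (Fin 2) (Fin 2) A := !![0, 1; -1, t]
  have hMN : M * N = 1 := by
    ext i j; fin_cases i <;> fin_cases j <;> simp [M, N]
  have hNM : N * M = 1 := by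
    ext i j; fin_cases i <;> fin_cases j <;> simp [M, N]
  have hadd : M + N = algebraMap A _ t := by
    ext i j; fin_cases i <;> fin_cases j <;> simp [M, N, Matrix.algebraMap_matrix_apply]
  have hM : M ^ (2 * 2 ^ e) = 1 := by
    refine pow_eq_one_of_aeval_pPoly hMN hNM e ?_
    rw [hadd, aeval_algebraMap_apply, ht, map_zero]
  have : NeZero (2 * 2 ^ e) := ⟨by positivity⟩
  -- The action of the cyclic part on the matrices, extended by zero to the other coset.
  let φ : QuaternionGroup (2 ^ e) → Matrix (Fin 2) (Fin 2) A
    | .a i => M ^ i.val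
    | .xa _ => 0
  let L : MonoidAlgebra W (QuaternionGroup (2 ^ e)) →ₗ[W] Matrix (Fin 2) (Fin 2) A :=
    (Finsupp.linearCombination W φ) ∘ₗ (MonoidAlgebra.coeffLinearEquiv W).toLinearMap
  have hLof (h) : L (MonoidAlgebra.of W _ h) = φ h := by
    simp [L]
  have hφ (h) : φ (.a 1 * h) = M * φ h := by
    cases h with
    | a i =>
      change M ^ (1 + i).val = M * M ^ i.val
      refine Eq.trans ?_ (pow_succ' M i.val)
      rw [pow_eq_pow_mod (i.val + 1) hM, ← ZMod.val_natCast, Nat.cast_add,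
        ZMod.natCast_zmod_val, Nat.cast_one, add_comm]
    | xa i => simp [φ]
  have hLx (z) : L (x * z) = M * L z := by
    induction z using MonoidAlgebra.induction_on with
    | of h => rw [hx, ← map_mul, hLof, hLof, hφ]
    | add a b ha hb => rw [mul_add, map_add, map_add, ha, hb, mul_add]
    | smul r a ha => rw [mul_smul_comm, map_smul, map_smul, ha, mul_smul_comm]
  have hLy (z) : L (y * z) = N * L z := by
    rw [← one_mul (L (y * z)), ← hNM, mul_assoc, ← hLx, ← mul_assoc x, hxy, one_mul]
  have hL (f : W[X]) : L (aeval (x + y) f) = algebraMap A _ (aeval t f) := by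
    induction f using Polynomial.induction_on' with
    | add p q hp hq => simp only [map_add, hp, hq]
    | monomial n r =>
      have hpow : L ((x + y) ^ n) = algebraMap A _ (t ^ n) := by
        induction n with
        | zero =>
          have h1 : L 1 = φ 1 := by rw [← hLof]; rfl
          rw [pow_zero, pow_zero, h1]
          simp only [φ, QuaternionGroup.one_def, ZMod.val_zero, pow_zero, map_one]
        | succ n ih =>
          rw [pow_succ', add_mul, map_add, hLx, hLy, ← add_mul, hadd, ih, ← map_mul, ← pow_succ']
      rw [aeval_monomial, aeval_monomial, ← Algebra.smul_def, map_smul, hpow, ← Algebra.smul_def,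
        Algebra.algebraMap_eq_smul_one, Algebra.algebraMap_eq_smul_one, smul_assoc]
  have h0 := hL g
  rw [hg, map_zero] at h0
  simpa [Matrix.algebraMap_matrix_apply] using (congrFun (congrFun h0 0) 0).symm

/-- If `ker ev ≤ ker th` and `th` is onto, then `th` factors through the range of `ev`, so its target
is a quotient of a subalgebra of `B`. -/
theorem exists_surjective_of_ker_le {W P B A : Type*} [CommRing W] [CommRing P] [Ring B]
    [CommRing A] [Algebra W P] [Algebra W B] [Algebra W A] (ev : P →ₐ[W] B) (th : P →ₐ[W] A)
    (hker : ∀ r, ev r = 0 → th r = 0) (hth : Function.Surjective th) :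
    ∃ f : ev.range →ₐ[W] A, Function.Surjective f := by
  let lft := Ideal.Quotient.liftₐ (RingHom.ker ev) th fun r hr => hker r hr
  refine ⟨lft.comp (Ideal.quotientKerEquivRange ev).symm.toAlgHom, fun a => ?_⟩
  obtain ⟨r, hr⟩ := hth a
  refine ⟨Ideal.quotientKerEquivRange ev (Ideal.Quotient.mk _ r), ?_⟩
  exact (congrArg lft ((Ideal.quotientKerEquivRange ev).symm_apply_apply _)).trans
    ((Ideal.Quotient.lift_mk _ _ _).trans hr)

/-- The result over any nontrivial `2`-adically complete base ring `W`, with `d = e + 1`. -/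
theorem exists_surjective_of_isAdicComplete {W : Type*} [CommRing W] [Nontrivial W]
    [IsAdicComplete (Ideal.span {(2 : W)}) W] (e : ℕ) :
    ∃ (S : Subalgebra W (MonoidAlgebra W (QuaternionGroup (2 ^ e))))
      (f : S →ₐ[W] (PowerSeries W ⧸ Ideal.span
        {((pPoly (e + 1)).map (Int.castRingHom W) : PowerSeries W)})),
      Function.Surjective f := by
  have hg : ((pPoly (e + 1)).map (Int.castRingHom W)).IsDistinguishedAt
      (Ideal.span {(2 : W)}) :=
    pPoly_isDistinguishedAt (e + 1)
  set g := (pPoly (e + 1)).map (Int.castRingHom W) with hg_def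
  let t := Ideal.Quotient.mk (Ideal.span {(g : PowerSeries W)}) PowerSeries.X
  have ht : Polynomial.aeval t g = 0 := by
    rw [aeval_mk_X, Ideal.Quotient.eq_zero_iff_mem]
    exact Ideal.mem_span_singleton_self _
  let u := MonoidAlgebra.of W (QuaternionGroup (2 ^ e)) (.a 1) +
    MonoidAlgebra.of W (QuaternionGroup (2 ^ e)) (.a (-1))
  exact ⟨_, exists_surjective_of_ker_le (Polynomial.aeval (R := W) u) (Polynomial.aeval t)
    (aeval_eq_zero_of_aeval_group e t ht) (exists_aeval_mk_X_eq hg)⟩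

/-
STATEMENT 16:
Let k be an algebraically closed field of characteristic 2, W the ring of 2-typical
Witt vectors over k, and d ≥ 2. Let D be the generalized quaternion group of order
2^{d+1} (the dicyclic group of order 4·2^{d-1}). Then W[[t]]/(p_{d+1}(t)) is
isomorphic to a subquotient ring of the group algebra WD: there exist a W-subalgebra
S of WD and a two-sided ideal J of S such that S/J ≅ W[[t]]/(p_{d+1}(t)) as
W-algebras.  (We express this by exhibiting a surjective W-algebra homomorphism
from a W-subalgebra S of WD onto W[[t]]/(p_{d+1}(t)); its kernel is the two-sided
ideal J.)
-/
theorem stmt16 (k : Type) [Field k] [IsAlgClosed k] [CharP k 2] (d : ℕ) (hd : 2 ≤ d) :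
    ∃ (S : Subalgebra (WittVector 2 k)
        (MonoidAlgebra (WittVector 2 k) (QuaternionGroup (2 ^ (d - 1)))))
      (f : S →ₐ[WittVector 2 k]
        (PowerSeries (WittVector 2 k) ⧸
          Ideal.span
            {((pPoly d).map (Int.castRingHom (WittVector 2 k)) :
                PowerSeries (WittVector 2 k))})),
      Function.Surjective f := by
  have : IsAdicComplete (Ideal.span {(2 : WittVector 2 k)}) (WittVector 2 k) := by
    exact_mod_cast WittVector.isAdicCompleteIdealSpanP (p := 2) (k := k)
  obtain ⟨e, rfl⟩ : ∃ e, d = e + 1 := ⟨d - 1, by omega⟩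
  exact exists_surjective_of_isAdicComplete (W := WittVector 2 k) e
end

section
/- Let k be a field of characteristic p > 0, G a finite group, and Z a central subgroup of G of order p. Let S and S' be non-isomorphic simple k[G/Z]-modules, regarded as kG-modules by inflation along G → G/Z. Then dim_k Ext¹_{kG}(S, S') = dim_k Ext¹_{k[G/Z]}(S, S'). -/
/-!
For representations `S`, `Y` of a group `G` over a field `k`, tensoring a projective resolution of
the trivial representation with `S` is exact (flatness over a field) and preserves projectives
(its right adjoint, the internal Hom, preserves epimorphisms), so it yields a projective resolution
of `S`. Currying then identifies `Extⁿ(S, Y)` with `Hⁿ(G, Hom_k(S, Y))` (`extIsoGroupCohomology`).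

It remains to see that inflation `H¹(G ⧸ Z, Hom_k(S, S')) → H¹(G, Hom_k(S, S'))` is bijective for
`Z` central acting trivially (`finrank_H1_inflation`). Injectivity holds because both groups have
the same coboundaries. For surjectivity, let `f` be a 1-cocycle on `G` and `z ∈ Z`. Expanding
`f (z g) = f (g z)` by the cocycle identity on both sides shows that `f z` is `G`-equivariant, so
`f z = 0` by Schur's lemma. Hence `f` is constant on the cosets of `Z` and comes from a cocycle
on `G ⧸ Z`.
-/

open CategoryTheory

/-- An `AddCommGroup` instance on the type synonym `ρ.asModule`. -/
noncomputable instance Representation.asModuleAddCommGroup {k G V : Type} [CommRing k]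
    [Monoid G] [AddCommGroup V] [Module k V] (ρ : Representation k G V) :
    AddCommGroup ρ.asModule :=
  inferInstanceAs (AddCommGroup V)

/-- The `k`-dimension of `Ext¹` in the category of `k`-linear representations of `G`
(equivalently, of `kG`-modules). -/
noncomputable def ext1Rank (k G : Type) [Field k] [Group G] {V₁ V₂ : Type}
    [AddCommGroup V₁] [Module k V₁] [AddCommGroup V₂] [Module k V₂]
    (ρ₁ : Representation k G V₁) (ρ₂ : Representation k G V₂) : ℕ :=
  Module.finrank k (((Ext k (Rep k G) 1).obj (Opposite.op (Rep.of ρ₁))).obj (Rep.of ρ₂))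

section ExtAsGroupCohomology

open MonoidalCategory

variable {k G : Type} [Field k] [Group G]

instance tensorLeft_preservesMono (S : Rep.{0} k G) :
    (tensorLeft S).PreservesMonomorphisms where
  preserves {X Y} f _ := by
    rw [Rep.mono_iff_injective] at *
    exact Module.Flat.lTensor_preserves_injective_linearMap (M := S.V) f.hom.toLinearMap ‹_›

instance ihom_preservesEpi (S : Rep.{0} k G) : (ihom S).PreservesEpimorphisms where
  preserves {X Y} f _ := by
    rw [Rep.epi_iff_surjective] at *
    -- A `k`-linear section of `f` lifts linear maps `S → Y`; it need not be equivariant.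
    obtain ⟨g, hg⟩ := f.hom.toLinearMap.exists_rightInverse_of_surjective
      (LinearMap.range_eq_top.2 ‹_›)
    intro (h : S.V →ₗ[k] Y.V)
    exact ⟨(g ∘ₗ h : S.V →ₗ[k] X.V), LinearMap.ext fun x => LinearMap.congr_fun hg (h x)⟩

instance tensorLeft_isLeftAdjoint (S : Rep.{0} k G) : (tensorLeft S).IsLeftAdjoint :=
  (ihom.adjunction S).isLeftAdjoint

instance tensorLeft_preservesHomology (S : Rep.{0} k G) : (tensorLeft S).PreservesHomology :=
  Functor.preservesHomology_of_preservesMonos_and_cokernels _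

instance tensorLeft_preservesProjective (S : Rep.{0} k G) :
    (tensorLeft S).PreservesProjectiveObjects :=
  (tensorLeft S).preservesProjectiveObjects_of_adjunction_of_preservesEpimorphisms
    (ihom.adjunction S)

/-- Currying `Hom(S ⊗ P, Y) ≅ Hom(P, Hom_k(S, Y))` as an isomorphism of cochain complexes. -/
noncomputable def linearYonedaTensorIso (S Y : Rep.{0} k G) (P : ChainComplex (Rep.{0} k G) ℕ) :
    ChainComplex.linearYonedaObj (((tensorLeft S).mapHomologicalComplex _).obj P) k Y ≅
      P.linearYonedaObj k ((ihom S).obj Y) :=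
  HomologicalComplex.Hom.isoOfComponents
    (fun i => (Rep.MonoidalClosed.linearHomEquiv S (P.X i) Y).toModuleIso)
    (fun i j _ => by
      ext f
      rfl)

/-- `Extⁿ(S, Y) ≅ Hⁿ(G, Hom_k(S, Y))`, computed with the projective resolution of `S ≅ S ⊗ k`
obtained by tensoring the bar resolution with `S`. -/
noncomputable def extIsoGroupCohomology (S Y : Rep.{0} k G) (n : ℕ) :
    ((Ext k (Rep k G) n).obj (Opposite.op S)).obj Y ≅ groupCohomology ((ihom S).obj Y) n :=
  ((Ext k (Rep k G) n).mapIso (ρ_ S).op).app Y ≪≫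
    ((tensorLeft S).mapProjectiveResolution (Rep.barResolution k G)).isoExt n Y ≪≫
    (HomologicalComplex.homologyFunctor _ _ n).mapIso (linearYonedaTensorIso S Y _) ≪≫
    (groupCohomologyIso ((ihom S).obj Y) n (Rep.barResolution k G)).symm

end ExtAsGroupCohomology

open groupCohomology in
/-- Inflation on `H¹` with coefficients in `Hom_k(S, S')` is bijective for a central subgroup `Z`
acting trivially on `S` and `S'`, provided there is no nonzero equivariant map `S → S'`. -/
theorem finrank_H1_inflation {k G : Type} [Field k] [Group G]
    (Z : Subgroup G) [Z.Normal] (hZ : Z ≤ Subgroup.center G)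
    {S S' : Type} [AddCommGroup S] [Module k S] [AddCommGroup S'] [Module k S']
    (ρ : Representation k (G ⧸ Z) S) (ρ' : Representation k (G ⧸ Z) S')
    (hhom : ∀ u : S →ₗ[k] S', (∀ h, u ∘ₗ ρ h = ρ' h ∘ₗ u) → u = 0) :
    Module.finrank k (H1 ((ihom (Rep.of (ρ.comp (QuotientGroup.mk' Z)))).obj
        (Rep.of (ρ'.comp (QuotientGroup.mk' Z))))) =
      Module.finrank k (H1 ((ihom (Rep.of ρ)).obj (Rep.of ρ'))) := by
  set A := (ihom (Rep.of (ρ.comp (QuotientGroup.mk' Z)))).obj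
        (Rep.of (ρ'.comp (QuotientGroup.mk' Z))) with hA
  set B := (ihom (Rep.of ρ)).obj (Rep.of ρ') with hB
  -- The inflation of `Hom_k(S, S')` is definitionally `Hom_k` of the inflations.
  let φ : Rep.res (QuotientGroup.mk' Z) B ⟶ A := 𝟙 A
  symm
  refine (LinearEquiv.ofBijective (groupCohomology.map (QuotientGroup.mk' Z) φ 1).hom
    ⟨(injective_iff_map_eq_zero _).2 fun x => ?_, fun x => ?_⟩).finrank_eq
  · induction x using H1_induction_on with | @h x =>
    intro hx
    erw [H1π_comp_map_apply] at hx
    rw [H1π_eq_zero_iff] at hx ⊢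
    obtain ⟨y, hy⟩ := hx
    refine ⟨y, funext fun g => ?_⟩
    obtain ⟨g, rfl⟩ := QuotientGroup.mk'_surjective Z g
    exact congr_fun hy g
  · induction x using H1_induction_on with | @h x =>
    have hx := (mem_cocycles₁_iff x.1).1 x.2
    have hρZ : ∀ z ∈ Z, A.ρ z = 1 := by
      intro z hz
      have h1 : A.ρ z = B.ρ (QuotientGroup.mk' Z z) := rfl
      have h2 : QuotientGroup.mk' Z z = 1 := (QuotientGroup.eq_one_iff z).2 hz
      rw [h1, h2, map_one]
      rfl
    -- The two cocycle expansions of `x (z g) = x (g z)` show that `x z` is `G`-invariant.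
    have hfix : ∀ z ∈ Z, ∀ g, A.ρ g (x.1 z) = x.1 z := by
      intro z hz g
      have h1 := hx z g
      have h2 := hx g z
      rw [Subgroup.mem_center_iff.1 (hZ hz) g, h1, hρZ z hz, Module.End.one_apply,
        add_comm] at h2
      exact (add_right_cancel h2).symm
    have hzero : ∀ z ∈ Z, x.1 z = 0 := by
      intro z hz
      refine hhom (x.1 z) fun h => ?_
      obtain ⟨g, rfl⟩ := QuotientGroup.mk'_surjective Z h
      obtain ⟨u, hu⟩ : ∃ u : S →ₗ[k] S', u = x.1 z := ⟨x.1 z, rfl⟩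
      have h1 : ρ' (QuotientGroup.mk' Z g) ∘ₗ u ∘ₗ ρ (QuotientGroup.mk' Z g⁻¹) = u := by
        subst hu
        exact hfix z hz g
      have h2 : ρ (QuotientGroup.mk' Z g⁻¹) ∘ₗ ρ (QuotientGroup.mk' Z g) = LinearMap.id := by
        rw [← Module.End.mul_eq_comp, ← map_mul, ← map_mul, inv_mul_cancel, map_one, map_one]
        rfl
      have h3 : u ∘ₗ ρ (QuotientGroup.mk' Z g) = ρ' (QuotientGroup.mk' Z g) ∘ₗ u := by
        conv_lhs => rw [← h1]
        rw [LinearMap.comp_assoc, LinearMap.comp_assoc, h2, LinearMap.comp_id]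
      subst hu
      exact h3
    have hcoset : ∀ a b : G, (QuotientGroup.leftRel Z) a b → x.1 a = x.1 b := by
      intro a b hab
      have hz := QuotientGroup.leftRel_apply.1 hab
      have h1 := hx a (a⁻¹ * b)
      rw [hzero _ hz, map_zero, zero_add, mul_inv_cancel_left] at h1
      exact h1.symm
    let y : G ⧸ Z → B := fun q => Quotient.liftOn' q x.1 hcoset
    have hy : y ∈ cocycles₁ B := by
      rw [mem_cocycles₁_iff]
      intro g h
      obtain ⟨g, rfl⟩ := QuotientGroup.mk'_surjective Z g
      obtain ⟨h, rfl⟩ := QuotientGroup.mk'_surjective Z h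
      exact hx g h
    refine ⟨H1π B ⟨y, hy⟩, ?_⟩
    erw [H1π_comp_map_apply]
    rfl

/-
STATEMENT 17:
Let k be a field of characteristic p > 0, G a finite group, and Z a central subgroup
of G of order p. Let S and S' be non-isomorphic simple k[G/Z]-modules, regarded as
kG-modules by inflation along G → G/Z. Then
dim_k Ext¹_{kG}(S, S') = dim_k Ext¹_{k[G/Z]}(S, S').
-/
theorem stmt17 (k : Type) [Field k] (p : ℕ) (hp : 0 < p) [CharP k p]
    (G : Type) [Group G] [Finite G]
    (Z : Subgroup G) (hZ : Z ≤ Subgroup.center G) (hcard : Nat.card Z = p) [Z.Normal]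
    (S S' : Type) [AddCommGroup S] [Module k S] [AddCommGroup S'] [Module k S']
    (ρ : Representation k (G ⧸ Z) S) (ρ' : Representation k (G ⧸ Z) S')
    (hsimple : IsSimpleModule (MonoidAlgebra k (G ⧸ Z)) ρ.asModule)
    (hsimple' : IsSimpleModule (MonoidAlgebra k (G ⧸ Z)) ρ'.asModule)
    (hnoniso : ¬ ∃ e : S ≃ₗ[k] S', ∀ (h : G ⧸ Z) (x : S), e (ρ h x) = ρ' h (e x)) :
    ext1Rank k G (ρ.comp (QuotientGroup.mk' Z)) (ρ'.comp (QuotientGroup.mk' Z))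
      = ext1Rank k (G ⧸ Z) ρ ρ' := by
  have : ρ.IsIrreducible := (Representation.irreducible_iff_isSimpleModule_asModule ρ).2 hsimple
  have : ρ'.IsIrreducible := (Representation.irreducible_iff_isSimpleModule_asModule ρ').2 hsimple'
  have hhom : ∀ u : S →ₗ[k] S', (∀ h, u ∘ₗ ρ h = ρ' h ∘ₗ u) → u = 0 := by
    intro u hu
    let f : ρ.IntertwiningMap ρ' := ⟨u, hu⟩
    rcases Representation.IsIrreducible.bijective_or_eq_zero f with hb | h0
    · exact (hnoniso ⟨LinearEquiv.ofBijective u hb, fun h x => LinearMap.congr_fun (hu h) x⟩).elim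
    · exact congr_arg Representation.IntertwiningMap.toLinearMap h0
  unfold ext1Rank
  rw [(extIsoGroupCohomology _ _ 1).toLinearEquiv.finrank_eq,
    (extIsoGroupCohomology (Rep.of ρ) (Rep.of ρ') 1).toLinearEquiv.finrank_eq]
  exact finrank_H1_inflation Z hZ ρ ρ' hhom
end
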